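/- Let m ≥ 2 and h ≥ 1, and let T(m,h) be the complete m-ary tree of height h with n = (m^{h+1}−1)/(m−1) vertices. Then the maximal gain of Player 1 against the opposing strategy μ2 is MGain(T(m,h), μ2) = Gain(T(m,h), Z(root), μ2) = m^{h+1}(m^h−1)/(m^{h+2}−m^{h+1}+m^h−1) = (n−1)((m−1)n+1)/(n(m²−m+1)+m−1); in particular the maximum of Gain(T(m,h), Z(x), μ2) over vertices x is attained at the root. -/

import Mathlib

/-- The competitive-diffusion payoff of Player 1 with starting vertex `x` against
starting vertex `y`: the number of vertices strictly closer to `x` than to `y`. -/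
noncomputable def gain {V : Type*} (G : SimpleGraph V) (x y : V) : ℕ :=
  {u : V | G.dist u x < G.dist u y}.ncard

/-- The expected gain of Player 1 playing mixed strategy `X` against mixed strategy `Y`. -/
noncomputable def Gain {V : Type*} (G : SimpleGraph V) [Fintype V] (X Y : V → ℝ) : ℝ :=
  ∑ x : V, ∑ y : V, X x * Y y * (gain G x y : ℝ)

/-- The pure strategy `Z(v)` concentrated on vertex `v`. -/
def pureStrat {V : Type*} [DecidableEq V] (v : V) : V → ℝ := fun u => if u = v then 1 else 0

/-- Vertices of the complete `m`-ary tree of height `h`: lists over `Fin m` of length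
at most `h`; the length of the list is the depth of the vertex. -/
def TreeVert (m h : ℕ) := {l : List (Fin m) // l.length ≤ h}

noncomputable instance (m h : ℕ) : Fintype (TreeVert m h) :=
  (List.finite_length_le (Fin m) h).fintype

instance (m h : ℕ) : DecidableEq (TreeVert m h) := Subtype.instDecidableEq

instance (m h : ℕ) : Nonempty (TreeVert m h) := ⟨⟨[], by simp⟩⟩

/-- The complete `m`-ary tree of height `h`: each vertex of depth `< h` has exactly
`m` children, obtained by prepending an element of `Fin m`. -/
def CompleteTree (m h : ℕ) : SimpleGraph (TreeVert m h) :=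
  SimpleGraph.fromRel (fun x y => x.1 = y.1.tail ∧ y.1.length = x.1.length + 1)

/-- The root of the complete `m`-ary tree. -/
def root (m h : ℕ) : TreeVert m h := ⟨[], by simp⟩

noncomputable def alpha1 (m h : ℕ) : ℝ :=
  ((m : ℝ) ^ h - 1) / ((m : ℝ) ^ (h + 2) - (m : ℝ) ^ (h + 1) + (m : ℝ) ^ h - 1)

noncomputable def beta1 (m h : ℕ) : ℝ :=
  ((m : ℝ) - 1) * (m : ℝ) ^ h / ((m : ℝ) ^ (h + 2) - (m : ℝ) ^ (h + 1) + (m : ℝ) ^ h - 1)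

noncomputable def alpha2 (m h : ℕ) : ℝ :=
  ((m : ℝ) - 1) * ((m : ℝ) ^ (h + 1) - (m : ℝ) ^ h + 1) /
    ((m : ℝ) ^ (h + 2) - (m : ℝ) ^ (h + 1) + (m : ℝ) ^ h - 1)

noncomputable def beta2 (m h : ℕ) : ℝ :=
  ((m : ℝ) ^ h - 1) / ((m : ℝ) ^ (h + 2) - (m : ℝ) ^ (h + 1) + (m : ℝ) ^ h - 1)

/-- The mixed strategy `μ₁`: probability `α₁` on the root, `β₁` on each depth-1 vertex. -/
noncomputable def mu1 (m h : ℕ) : TreeVert m h → ℝ := fun v =>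
  if v.1.length = 0 then alpha1 m h else if v.1.length = 1 then beta1 m h else 0

/-- The mixed strategy `μ₂`: probability `α₂` on the root, `β₂` on each depth-1 vertex. -/
noncomputable def mu2 (m h : ℕ) : TreeVert m h → ℝ := fun v =>
  if v.1.length = 0 then alpha2 m h else if v.1.length = 1 then beta2 m h else 0

/-!
Let `s = 1 + m + ⋯ + m ^ (h - 1)` be the number of vertices of a branch at the root. Against a
strategy with weight `α` on the root and `β ≤ α` on each of its children, a child of the root gains
nothing from itself and at most `s` from the root and from each other child, hence at most
`s * (α + (m - 1) * β)` in total. A vertex strictly inside the branch of a child has the same bound: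
against both that child and the root it is confined to a subtree one level lower, and two such
subtrees have fewer than `s` vertices because `m ≥ 2`. The root gains `m ^ h` from each of its `m`
children, so `m ^ (h + 1) * β` in total. The strategy `μ₂` is the one that equalizes the two values.
-/

section Gain

variable {V : Type*} (G : SimpleGraph V)

theorem gain_self (x : V) : gain G x x = 0 := by
  simp [gain]

theorem Gain_pureStrat [Fintype V] [DecidableEq V] (x : V) (Y : V → ℝ) :
    Gain G (pureStrat x) Y = ∑ y, Y y * gain G x y := by
  simp only [Gain, mul_assoc, ← Finset.mul_sum]
  simp [pureStrat]

end Gain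

/-- `S` is a branch of `G` hanging from `p` at `v`: the edge `pv` is the only edge between `S` and
its complement, and `v` is its end in `S`. -/
structure IsBranch {V : Type*} (G : SimpleGraph V) (S : Set V) (p v : V) : Prop where
  adj : G.Adj p v
  notMem : p ∉ S
  mem : v ∈ S
  eq_of_adj : ∀ ⦃a b : V⦄, a ∉ S → b ∈ S → G.Adj a b → a = p ∧ b = v

namespace IsBranch

variable {V : Type*} {G : SimpleGraph V} {S : Set V} {p v u x y : V}

theorem dist_add_one_add_dist_le_length (hS : IsBranch G S p v) (hG : G.Connected)
    (w : G.Walk u x) (hu : u ∉ S) (hx : x ∈ S) :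
    G.dist u p + 1 + G.dist v x ≤ w.length := by
  induction w with
  | nil => exact absurd hx hu
  | @cons u u' x hadj w ih =>
    rw [SimpleGraph.Walk.length_cons]
    by_cases hu' : u' ∈ S
    · obtain ⟨rfl, rfl⟩ := hS.eq_of_adj hu hu' hadj
      have := SimpleGraph.dist_le w
      rw [SimpleGraph.dist_self]
      omega
    · have := ih hu' hx
      have : G.dist u p ≤ G.dist u u' + G.dist u' p := hG.dist_triangle
      have : G.dist u u' = 1 := SimpleGraph.dist_eq_one_iff_adj.2 hadj
      omega

theorem dist_eq (hS : IsBranch G S p v) (hG : G.Connected) (hu : u ∉ S) (hx : x ∈ S) :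
    G.dist u x = G.dist u p + 1 + G.dist v x := by
  apply le_antisymm
  · have : G.dist u x ≤ G.dist u p + G.dist p x := hG.dist_triangle
    have : G.dist p x ≤ G.dist p v + G.dist v x := hG.dist_triangle
    have : G.dist p v = 1 := SimpleGraph.dist_eq_one_iff_adj.2 hS.adj
    omega
  · obtain ⟨w, hw⟩ := hG.exists_walk_length_eq_dist u x
    exact hw ▸ hS.dist_add_one_add_dist_le_length hG w hu hx

theorem gain_le_ncard (hS : IsBranch G S p v) (hG : G.Connected) (hfin : S.Finite) (hx : x ∈ S)
    (hy : G.dist p y ≤ G.dist v x + 1) : gain G x y ≤ S.ncard := by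
  refine Set.ncard_le_ncard (fun u (hu : G.dist u x < G.dist u y) => ?_) hfin
  by_contra huS
  have := hS.dist_eq hG huS hx
  have : G.dist u y ≤ G.dist u p + G.dist p y := hG.dist_triangle
  omega

theorem gain_eq_ncard_compl (hS : IsBranch G S p v) (hG : G.Connected) :
    gain G p v = Sᶜ.ncard := by
  suffices h : {u | G.dist u p < G.dist u v} = Sᶜ by rw [gain, h]
  ext u
  rw [Set.mem_ofPred_eq, Set.mem_compl_iff]
  by_cases hu : u ∈ S
  · have : G.dist p u = G.dist p p + 1 + G.dist v u := hS.dist_eq hG hS.notMem hu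
    rw [SimpleGraph.dist_comm (u := u) (v := p), SimpleGraph.dist_comm (u := u) (v := v)]
    simp only [hu, not_true_eq_false, iff_false]
    omega
  · have := hS.dist_eq hG hu hS.mem
    simp only [hu, not_false_eq_true, iff_true]
    omega

end IsBranch

theorem sum_le_add_card_sub_one_mul {ι R : Type*} [Fintype ι] [Ring R] [PartialOrder R]
    [IsOrderedRing R] (j : ι) {g : ι → R} {s t : R} (hj : g j ≤ t) (hg : ∀ i, g i ≤ s) :
    ∑ i, g i ≤ t + (Fintype.card ι - 1) * s := by
  classical
  have hrest : ∑ i ∈ Finset.univ.erase j, g i ≤ (Fintype.card ι - 1) * s := by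
    refine (Finset.sum_le_card_nsmul _ _ s fun i _ => hg i).trans_eq ?_
    rw [nsmul_eq_mul, Finset.cast_card_erase_of_mem (Finset.mem_univ j), Finset.card_univ]
  rw [← Finset.add_sum_erase _ _ (Finset.mem_univ j)]
  exact add_le_add hj hrest

theorem ncard_setOf_length_lt (α : Type*) [Fintype α] (n : ℕ) :
    {l : List α | l.length < n}.ncard = ∑ k ∈ Finset.range n, Fintype.card α ^ k := by
  induction n with
  | zero => simp
  | succ n ih =>
    have hunion : {l : List α | l.length < n + 1} = {l | l.length < n} ∪ {l | l.length = n} := by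
      ext l
      exact Nat.lt_succ_iff_lt_or_eq
    have hdisj : Disjoint {l : List α | l.length < n} {l | l.length = n} :=
      Set.disjoint_left.2 fun _ hlt heq => hlt.ne heq
    have hcard : {l : List α | l.length = n}.ncard = Fintype.card α ^ n := by
      rw [← card_vector n, ← Nat.card_eq_fintype_card]
      rfl
    rw [hunion, Set.ncard_union_eq hdisj (List.finite_length_lt α n) (List.finite_length_eq α n),
      ih, hcard, Finset.sum_range_succ]

namespace TreeVert

variable {m h : ℕ}

/-- The vertices at or below `v`. A vertex lists its path from the root starting with the last
step, so its ancestors are its suffixes. -/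
def subtree (v : TreeVert m h) : Set (TreeVert m h) := {u | v.1 <:+ u.1}

/-- The child of the root in direction `i`. The height is `h + 1` so that the root has children. -/
def child (i : Fin m) : TreeVert m (h + 1) := ⟨[i], by simp⟩

theorem child_injective : Function.Injective (child : Fin m → TreeVert m (h + 1)) :=
  fun _ _ hij => List.singleton_injective (congrArg Subtype.val hij)

theorem child_ne_root (i : Fin m) : child i ≠ root m (h + 1) :=
  fun hi => List.cons_ne_nil i [] (congrArg Subtype.val hi)

theorem natCard (m h : ℕ) :
    Nat.card (TreeVert m h) = ∑ k ∈ Finset.range (h + 1), m ^ k := by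
  have hlists := ncard_setOf_length_lt (Fin m) (h + 1)
  simp only [Nat.lt_succ_iff, Fintype.card_fin] at hlists
  exact hlists

theorem ncard_subtree (v : TreeVert m h) :
    v.subtree.ncard = ∑ k ∈ Finset.range (h + 1 - v.1.length), m ^ k := by
  have hlists := ncard_setOf_length_lt (Fin m) (h + 1 - v.1.length)
  rw [Fintype.card_fin] at hlists
  have length_append_le (t : List (Fin m)) (ht : t.length < h + 1 - v.1.length) :
      (t ++ v.1).length ≤ h := by
    rw [List.length_append]
    omega
  rw [← hlists]
  refine (Set.ncard_congr (fun t ht => ⟨t ++ v.1, length_append_le t ht⟩)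
    (fun t _ => List.suffix_append t v.1)
    (fun s t _ _ hst => List.append_cancel_right (congrArg Subtype.val hst)) ?_).symm
  rintro ⟨u, hu⟩ ⟨t, rfl⟩
  rw [List.length_append] at hu
  exact ⟨t, show t.length < h + 1 - v.1.length by omega, rfl⟩

end TreeVert

namespace CompleteTree

open TreeVert

variable {m h : ℕ}

theorem adj_iff {x y : TreeVert m h} :
    (CompleteTree m h).Adj x y ↔ (∃ c, y.1 = c :: x.1) ∨ (∃ c, x.1 = c :: y.1) := by
  have parent_iff (x y : TreeVert m h) :
      (x.1 = y.1.tail ∧ y.1.length = x.1.length + 1) ↔ ∃ c, y.1 = c :: x.1 := by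
    cases hy : y.1 <;> simp +contextual [eq_comm]
  rw [CompleteTree, SimpleGraph.fromRel_adj, parent_iff, parent_iff, and_iff_right_of_imp]
  rintro hxy rfl
  simp at hxy

theorem connected (m h : ℕ) : (CompleteTree m h).Connected := by
  have reachable_from_root (l : List (Fin m)) (hl : l.length ≤ h) :
      (CompleteTree m h).Reachable (root m h) ⟨l, hl⟩ := by
    induction l with
    | nil => exact .rfl
    | cons c t ih =>
      have ht : t.length ≤ h := (Nat.le_succ _).trans hl
      exact (ih ht).trans (adj_iff.2 (.inl ⟨c, rfl⟩)).reachable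
  exact ⟨fun x y => (reachable_from_root x.1 x.2).symm.trans (reachable_from_root y.1 y.2)⟩

theorem isBranch_subtree {p v : TreeVert m h} {c : Fin m} (hv : v.1 = c :: p.1) :
    IsBranch (CompleteTree m h) v.subtree p v where
  adj := adj_iff.2 (.inl ⟨c, hv⟩)
  notMem hp := by simpa [hv] using List.IsSuffix.length_le hp
  mem := List.suffix_rfl
  eq_of_adj a b ha hb hab := by
    rcases adj_iff.1 hab with ⟨d, hd⟩ | ⟨d, hd⟩
    · change v.1 <:+ b.1 at hb
      rw [hd, List.suffix_cons_iff] at hb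
      have hvb : v.1 = d :: a.1 := hb.resolve_right ha
      exact ⟨Subtype.ext (List.cons.inj (hvb.symm.trans hv)).2, Subtype.ext (hd.trans hvb.symm)⟩
    · exact absurd (List.IsSuffix.trans hb (hd ▸ List.suffix_cons d b.1)) ha

theorem gain_le_geom_sum {p v x y : TreeVert m h} {c : Fin m} (hv : v.1 = c :: p.1)
    (hx : x ∈ v.subtree) (hy : (CompleteTree m h).dist p y ≤ 1) :
    gain (CompleteTree m h) x y ≤ ∑ k ∈ Finset.range (h - p.1.length), m ^ k := by
  have hgain := (isBranch_subtree hv).gain_le_ncard (connected m h) (Set.toFinite _) hx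
    (hy.trans (Nat.le_add_left _ _))
  rwa [ncard_subtree, hv, List.length_cons, Nat.add_sub_add_right] at hgain

theorem dist_root_child (i : Fin m) :
    (CompleteTree m (h + 1)).dist (root m (h + 1)) (child i) = 1 :=
  SimpleGraph.dist_eq_one_iff_adj.2 (adj_iff.2 (.inl ⟨i, rfl⟩))

theorem gain_root_child (i : Fin m) :
    gain (CompleteTree m (h + 1)) (root m (h + 1)) (child i) = m ^ (h + 1) := by
  rw [(isBranch_subtree (p := root m (h + 1)) (v := child i) rfl).gain_eq_ncard_compl
    (connected m _), Set.ncard_compl, natCard, ncard_subtree]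
  simp [child, Finset.sum_range_succ _ (h + 1)]

end CompleteTree

/-- The weighting of the vertices of `T(m, h)` with weight `a` on the root and `b` on each of its
children. The paper's strategies `μ₁` and `μ₂` have this form. -/
def rootChildWeight (m h : ℕ) (a b : ℝ) : TreeVert m h → ℝ := fun v =>
  if v.1.length = 0 then a else if v.1.length = 1 then b else 0

section RootChildWeight

open TreeVert CompleteTree

variable {m h : ℕ} {a b : ℝ}

theorem sum_rootChildWeight_mul (f : TreeVert m (h + 1) → ℝ) :
    ∑ v, rootChildWeight m (h + 1) a b v * f v =
      a * f (root m (h + 1)) + b * ∑ i, f (child i) := by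
  rw [← Finset.sum_subset
    (Finset.subset_univ (insert (root m (h + 1)) (Finset.univ.image child))),
    Finset.sum_insert (by simp [child_ne_root]), Finset.sum_image child_injective.injOn,
    Finset.mul_sum]
  · simp [rootChildWeight, root, child]
  · intro v _ hv
    have hroot : v.1.length ≠ 0 := fun h0 =>
      hv (Finset.mem_insert.2 (.inl (Subtype.ext (List.length_eq_zero_iff.1 h0))))
    have hchild : v.1.length ≠ 1 := fun h1 => by
      obtain ⟨i, hi⟩ := List.length_eq_one_iff.1 h1
      exact hv (Finset.mem_insert_of_mem
        (Finset.mem_image.2 ⟨i, Finset.mem_univ i, Subtype.ext hi.symm⟩))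
    simp [rootChildWeight, hroot, hchild]

theorem Gain_pureStrat_rootChildWeight (x : TreeVert m (h + 1)) :
    Gain (CompleteTree m (h + 1)) (pureStrat x) (rootChildWeight m (h + 1) a b) =
      a * gain (CompleteTree m (h + 1)) x (root m (h + 1)) +
        b * ∑ i, (gain (CompleteTree m (h + 1)) x (child i) : ℝ) := by
  rw [Gain_pureStrat, sum_rootChildWeight_mul]

theorem Gain_root_rootChildWeight :
    Gain (CompleteTree m (h + 1)) (pureStrat (root m (h + 1))) (rootChildWeight m (h + 1) a b) =
      (m : ℝ) ^ (h + 2) * b := by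
  simp only [Gain_pureStrat_rootChildWeight, gain_self, gain_root_child, Nat.cast_zero,
    Nat.cast_pow, Finset.sum_const, Finset.card_univ, Fintype.card_fin, nsmul_eq_mul]
  ring

theorem Gain_rootChildWeight_le (ha : 0 ≤ a) (hb : 0 ≤ b) {x : TreeVert m (h + 1)} {i : Fin m}
    {r s t : ℕ} (hroot : gain (CompleteTree m (h + 1)) x (root m (h + 1)) ≤ r)
    (hi : gain (CompleteTree m (h + 1)) x (child i) ≤ t)
    (hchild : ∀ j, gain (CompleteTree m (h + 1)) x (child j) ≤ s) :
    Gain (CompleteTree m (h + 1)) (pureStrat x) (rootChildWeight m (h + 1) a b) ≤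
      a * r + b * (t + (m - 1) * s) := by
  have hsum : ∑ j, (gain (CompleteTree m (h + 1)) x (child j) : ℝ) ≤ t + (m - 1) * s := by
    simpa only [Fintype.card_fin] using sum_le_add_card_sub_one_mul i
      (g := fun j => (gain (CompleteTree m (h + 1)) x (child j) : ℝ))
      (Nat.cast_le.2 hi) (fun j => Nat.cast_le.2 (hchild j))
  rw [Gain_pureStrat_rootChildWeight]
  gcongr

theorem gain_le_geom_sum_of_mem_subtree_child {x y : TreeVert m (h + 1)} {i : Fin m}
    (hx : x ∈ (child i).subtree) (hy : (CompleteTree m (h + 1)).dist (root m (h + 1)) y ≤ 1) :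
    gain (CompleteTree m (h + 1)) x y ≤ ∑ k ∈ Finset.range (h + 1), m ^ k :=
  gain_le_geom_sum (p := root m (h + 1)) rfl hx hy

theorem Gain_child_rootChildWeight_le (ha : 0 ≤ a) (hb : 0 ≤ b) (i : Fin m) :
    Gain (CompleteTree m (h + 1)) (pureStrat (child i)) (rootChildWeight m (h + 1) a b) ≤
      (∑ k ∈ Finset.range (h + 1), (m : ℝ) ^ k) * (a + (m - 1) * b) := by
  have hmem : (child i : TreeVert m (h + 1)) ∈ (child i).subtree := List.suffix_rfl
  refine (Gain_rootChildWeight_le ha hb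
    (gain_le_geom_sum_of_mem_subtree_child hmem (by simp)) (gain_self _ (child i)).le
    fun j => gain_le_geom_sum_of_mem_subtree_child hmem (dist_root_child j).le).trans_eq ?_
  push_cast
  ring

theorem Gain_rootChildWeight_le_of_two_le_depth (hm : 2 ≤ m) (hb : 0 ≤ b) (hab : b ≤ a)
    {x : TreeVert m (h + 1)} {l : List (Fin m)} {c i : Fin m} (hx : x.1 = l ++ [c, i]) :
    Gain (CompleteTree m (h + 1)) (pureStrat x) (rootChildWeight m (h + 1) a b) ≤
      (∑ k ∈ Finset.range (h + 1), (m : ℝ) ^ k) * (a + (m - 1) * b) := by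
  have hlen := x.2
  rw [hx, List.length_append] at hlen
  let v : TreeVert m (h + 1) := ⟨[c, i], (Nat.le_add_left _ _).trans hlen⟩
  have hxv : x ∈ v.subtree := ⟨l, hx.symm⟩
  have hxi : x ∈ (child i).subtree := ⟨l ++ [c], by simp [hx, child]⟩
  have hnear {y : TreeVert m (h + 1)} (hy : (CompleteTree m (h + 1)).dist (child i) y ≤ 1) :
      gain (CompleteTree m (h + 1)) x y ≤ ∑ k ∈ Finset.range h, m ^ k :=
    gain_le_geom_sum (p := child i) rfl hxv hy
  have hhalf :
      2 * ∑ k ∈ Finset.range h, (m : ℝ) ^ k ≤ ∑ k ∈ Finset.range (h + 1), (m : ℝ) ^ k := by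
    rw [geom_sum_succ]
    have hm' : (2 : ℝ) ≤ m := by exact_mod_cast hm
    exact le_add_of_le_of_nonneg (mul_le_mul_of_nonneg_right hm' (by positivity)) zero_le_one
  have hGain := Gain_rootChildWeight_le (i := i) (hb.trans hab) hb
    (hnear (by rw [SimpleGraph.dist_comm, dist_root_child])) (hnear (by simp))
    fun j => gain_le_geom_sum_of_mem_subtree_child hxi (dist_root_child j).le
  push_cast at hGain
  set s := ∑ k ∈ Finset.range (h + 1), (m : ℝ) ^ k
  set t := ∑ k ∈ Finset.range h, (m : ℝ) ^ k
  have ht : 0 ≤ t := by positivity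
  calc Gain (CompleteTree m (h + 1)) (pureStrat x) (rootChildWeight m (h + 1) a b)
      ≤ a * t + b * (t + (m - 1) * s) := hGain
    _ ≤ a * t + a * t + b * ((m - 1) * s) := by linarith [mul_le_mul_of_nonneg_right hab ht]
    _ ≤ s * (a + (m - 1) * b) := by linarith [mul_le_mul_of_nonneg_left hhalf (hb.trans hab)]

theorem Gain_rootChildWeight_le_of_ne_root (hm : 2 ≤ m) (hb : 0 ≤ b) (hab : b ≤ a)
    {x : TreeVert m (h + 1)} (hx : x ≠ root m (h + 1)) :
    Gain (CompleteTree m (h + 1)) (pureStrat x) (rootChildWeight m (h + 1) a b) ≤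
      (∑ k ∈ Finset.range (h + 1), (m : ℝ) ^ k) * (a + (m - 1) * b) := by
  rcases List.eq_nil_or_concat' x.1 with hnil | ⟨l, i, hl⟩
  · exact absurd (Subtype.ext hnil) hx
  rcases List.eq_nil_or_concat' l with rfl | ⟨l', c, rfl⟩
  · obtain rfl : x = child i := Subtype.ext hl
    exact Gain_child_rootChildWeight_le (hb.trans hab) hb i
  · exact Gain_rootChildWeight_le_of_two_le_depth hm hb hab (l := l') (by simpa using hl)

end RootChildWeight

section EqualizingWeights

variable {m h : ℕ}

theorem mu2_eq_rootChildWeight (m h : ℕ) :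
    mu2 m h = rootChildWeight m h (alpha2 m h) (beta2 m h) := rfl

theorem alpha2_denom_pos (hm : 2 ≤ m) (h : ℕ) :
    0 < (m : ℝ) ^ (h + 2) - (m : ℝ) ^ (h + 1) + (m : ℝ) ^ h - 1 := by
  have hm' : (2 : ℝ) ≤ m := by exact_mod_cast hm
  have hpow : (1 : ℝ) ≤ (m : ℝ) ^ h := one_le_pow₀ (by linarith)
  have hpow_succ : (0 : ℝ) < (m : ℝ) ^ (h + 1) * (m - 1) := mul_pos (by positivity) (by linarith)
  linear_combination hpow + hpow_succ

theorem beta2_nonneg (hm : 2 ≤ m) (h : ℕ) : 0 ≤ beta2 m h :=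
  div_nonneg (sub_nonneg.2 (one_le_pow₀ (Nat.one_le_cast.2 (by omega))))
    (alpha2_denom_pos hm h).le

theorem beta2_le_alpha2 (hm : 2 ≤ m) (h : ℕ) : beta2 m h ≤ alpha2 m h := by
  refine div_le_div_of_nonneg_right ?_ (alpha2_denom_pos hm h).le
  have hm' : (1 : ℝ) ≤ m - 1 := by
    have : (2 : ℝ) ≤ m := by exact_mod_cast hm
    linarith
  have hpow : (m : ℝ) ^ h ≤ (m : ℝ) ^ (h + 1) - (m : ℝ) ^ h + 1 := by
    have : (m : ℝ) ^ h * 1 ≤ (m : ℝ) ^ h * (m - 1) := by gcongr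
    linear_combination this
  calc (m : ℝ) ^ h - 1 ≤ (m : ℝ) ^ (h + 1) - (m : ℝ) ^ h + 1 := by linarith
    _ ≤ (m - 1) * ((m : ℝ) ^ (h + 1) - (m : ℝ) ^ h + 1) :=
      le_mul_of_one_le_left ((by positivity : (0 : ℝ) ≤ (m : ℝ) ^ h).trans hpow) hm'

theorem geom_sum_mul_alpha2_add_beta2 (hm : 2 ≤ m) (h : ℕ) :
    (∑ k ∈ Finset.range h, (m : ℝ) ^ k) * (alpha2 m h + (m - 1) * beta2 m h) =
      (m : ℝ) ^ (h + 1) * beta2 m h := by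
  have hD := (alpha2_denom_pos hm h).ne'
  have hgeom := geom_sum_mul (m : ℝ) h
  rw [alpha2, beta2]
  field_simp
  linear_combination (m : ℝ) ^ (h + 1) * hgeom

theorem Gain_le_Gain_root_mu2 (hm : 2 ≤ m) (x : TreeVert m (h + 1)) :
    Gain (CompleteTree m (h + 1)) (pureStrat x) (mu2 m (h + 1)) ≤
      Gain (CompleteTree m (h + 1)) (pureStrat (root m (h + 1))) (mu2 m (h + 1)) := by
  rcases eq_or_ne x (root m (h + 1)) with rfl | hx
  · exact le_rfl
  · rw [mu2_eq_rootChildWeight, Gain_root_rootChildWeight, ← geom_sum_mul_alpha2_add_beta2 hm]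
    exact Gain_rootChildWeight_le_of_ne_root hm (beta2_nonneg hm _) (beta2_le_alpha2 hm _) hx

theorem Gain_root_mu2 (m h : ℕ) :
    Gain (CompleteTree m (h + 1)) (pureStrat (root m (h + 1))) (mu2 m (h + 1)) =
      (m : ℝ) ^ (h + 2) * ((m : ℝ) ^ (h + 1) - 1) /
        ((m : ℝ) ^ (h + 3) - (m : ℝ) ^ (h + 2) + (m : ℝ) ^ (h + 1) - 1) := by
  rw [mu2_eq_rootChildWeight, Gain_root_rootChildWeight, beta2, mul_div_assoc]

end EqualizingWeights

theorem pow_mul_pow_sub_one_div_eq_of_eq_geom {K : Type*} [Field K] {q n : K} (hq0 : q ≠ 0)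
    (hq1 : q ≠ 1) {h : ℕ} (hn : n = (q ^ (h + 1) - 1) / (q - 1)) :
    q ^ (h + 1) * (q ^ h - 1) / (q ^ (h + 2) - q ^ (h + 1) + q ^ h - 1) =
      (n - 1) * ((q - 1) * n + 1) / (n * (q ^ 2 - q + 1) + q - 1) := by
  have hq1' : q - 1 ≠ 0 := sub_ne_zero.2 hq1
  have hpow : q ^ (h + 1) = (q - 1) * n + 1 := by
    rw [hn, mul_div_cancel₀ _ hq1', sub_add_cancel]
  have hnum : q * (q ^ (h + 1) * (q ^ h - 1)) = (q - 1) * ((n - 1) * ((q - 1) * n + 1)) := by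
    rw [← hpow]
    linear_combination q ^ (h + 1) * hpow
  have hden : q * (q ^ (h + 2) - q ^ (h + 1) + q ^ h - 1) =
      (q - 1) * (n * (q ^ 2 - q + 1) + q - 1) := by
    linear_combination (q ^ 2 - q + 1) * hpow
  rw [← mul_div_mul_left _ _ hq0, hnum, hden, mul_div_mul_left _ _ hq1']

/-- On the complete `m`-ary tree of height `h`, the maximal gain of Player 1 against the
opposing strategy `μ₂` (the maximum over vertices `x` of `Gain(T, Z(x), μ₂)`) is attained
at the root and equals `m^{h+1}(m^h - 1)/(m^{h+2} - m^{h+1} + m^h - 1)`, which equals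
`(n-1)((m-1)n+1)/(n(m²-m+1)+m-1)` where `n = (m^{h+1}-1)/(m-1)`. -/
theorem stmt_13 (m h : ℕ) (hm : 2 ≤ m) (hh : 1 ≤ h)
    (n : ℝ) (hn : n = ((m : ℝ) ^ (h + 1) - 1) / ((m : ℝ) - 1)) :
    Finset.univ.sup' Finset.univ_nonempty
        (fun x : TreeVert m h => Gain (CompleteTree m h) (pureStrat x) (mu2 m h)) =
      Gain (CompleteTree m h) (pureStrat (root m h)) (mu2 m h) ∧
    Gain (CompleteTree m h) (pureStrat (root m h)) (mu2 m h) =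
      (m : ℝ) ^ (h + 1) * ((m : ℝ) ^ h - 1) /
        ((m : ℝ) ^ (h + 2) - (m : ℝ) ^ (h + 1) + (m : ℝ) ^ h - 1) ∧
    (m : ℝ) ^ (h + 1) * ((m : ℝ) ^ h - 1) /
        ((m : ℝ) ^ (h + 2) - (m : ℝ) ^ (h + 1) + (m : ℝ) ^ h - 1) =
      (n - 1) * (((m : ℝ) - 1) * n + 1) / (n * ((m : ℝ) ^ 2 - (m : ℝ) + 1) + (m : ℝ) - 1) := by
  obtain ⟨h, rfl⟩ := Nat.exists_eq_add_of_le' hh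
  have hm0 : (m : ℝ) ≠ 0 := Nat.cast_ne_zero.2 (by omega)
  have hm1 : (m : ℝ) ≠ 1 := Nat.cast_ne_one.2 (by omega)
  exact ⟨le_antisymm (Finset.sup'_le _ _ fun x _ => Gain_le_Gain_root_mu2 hm x)
      (Finset.le_sup' (fun x => Gain (CompleteTree m (h + 1)) (pureStrat x) (mu2 m (h + 1)))
        (Finset.mem_univ (root m (h + 1)))),
    Gain_root_mu2 m h,
    pow_mul_pow_sub_one_div_eq_of_eq_geom hm0 hm1 hn⟩
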